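/- For every real t with 0 < t < 1, the function K(t) = −2 + 6t + 6·(1 − t − π²/9)·ln(1−t) − 2·(1 − t − ln(t))·ln²(1−t) − 2·(t − (1+t)·ln(1−t))·Li₂(t) + t·Li₂(t)² + 4·Li₃(1−t) has derivative K′(t) = Li₂(t)². -/

import Mathlib

open Real

/-- The polylogarithm `Li s x = ∑_{k=1}^∞ x^k / k^s` for real `x` with `|x| < 1`. -/
noncomputable def Li (s : ℕ) (x : ℝ) : ℝ := ∑' k : ℕ, x ^ (k + 1) / ((k : ℝ) + 1) ^ s

/-- `ζ(3) = ∑_{k=1}^∞ 1/k³`. -/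
noncomputable def zeta3 : ℝ := ∑' k : ℕ, 1 / ((k : ℝ) + 1) ^ 3

/-!
Write `D = Li 2` and `L x = log (1 - x)`, so that `x * D' x = -L x`. Two integrations by parts
reduce a primitive of `D ^ 2` to one of `D * L`, and the latter to primitives of `L`, `L ^ 2` and
`L ^ 2 / x`. The last of these is elementary up to `Li 2 (1 - x)` and `Li 3 (1 - x)`, and Euler's
reflection formula trades `Li 2 (1 - x)` for `D x`.
-/

open Set

section Polylogarithm

variable {x : ℝ}

lemma Li_zero_right (s : ℕ) : Li s 0 = 0 := by simp [Li]

lemma Li_one_left (hx : |x| < 1) : Li 1 x = -log (1 - x) := by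
  simpa [Li] using (hasSum_pow_div_log_of_abs_lt_one hx).tsum_eq

lemma Li_two_one : Li 2 1 = π ^ 2 / 6 := by
  have h := (hasSum_nat_add_iff' (f := fun n : ℕ => (1 : ℝ) / (n : ℝ) ^ 2) 1).2 hasSum_zeta_two
  simpa [Li] using h.tsum_eq

lemma Li_eq_mul_tsum (s : ℕ) (x : ℝ) : Li s x = x * ∑' k : ℕ, x ^ k / ((k : ℝ) + 1) ^ s := by
  rw [Li, ← tsum_mul_left]
  exact tsum_congr fun k => by ring

lemma continuousOn_Li {s : ℕ} (hs : 1 < s) : ContinuousOn (Li s) (Icc (-1) 1) := by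
  have hsum : Summable fun k : ℕ => 1 / ((k : ℝ) + 1) ^ s := by
    simpa using (summable_nat_add_iff 1).2 (Real.summable_one_div_nat_pow.2 hs)
  refine continuousOn_tsum (fun k => by fun_prop) hsum fun k x hx => ?_
  have hpow : |x| ^ (k + 1) ≤ 1 := pow_le_one₀ (abs_nonneg x) (abs_le.2 hx)
  have hden : (0 : ℝ) ≤ ((k : ℝ) + 1) ^ s := by positivity
  rw [norm_div, norm_pow, Real.norm_eq_abs, Real.norm_of_nonneg hden]
  gcongr

lemma hasDerivAt_pow_succ_div (s k : ℕ) (x : ℝ) :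
    HasDerivAt (fun y : ℝ => y ^ (k + 1) / ((k : ℝ) + 1) ^ (s + 1))
      (x ^ k / ((k : ℝ) + 1) ^ s) x := by
  refine ((hasDerivAt_pow (k + 1) x).div_const _).congr_deriv ?_
  push_cast
  field_simp
  ring

lemma hasDerivAt_Li_succ_tsum (s : ℕ) (hx : |x| < 1) :
    HasDerivAt (Li (s + 1)) (∑' k : ℕ, x ^ k / ((k : ℝ) + 1) ^ s) x := by
  obtain ⟨r, hxr, hr⟩ := exists_between hx
  have hr_pos : 0 < r := (abs_nonneg x).trans_lt hxr
  have hbound (k : ℕ) (y : ℝ) (hy : y ∈ Metric.ball 0 r) :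
      ‖y ^ k / ((k : ℝ) + 1) ^ s‖ ≤ r ^ k := by
    have hy : |y| ≤ r := (mem_ball_zero_iff.1 hy).le
    have hden : (1 : ℝ) ≤ ((k : ℝ) + 1) ^ s := one_le_pow₀ (by simp)
    rw [norm_div, norm_pow, Real.norm_eq_abs, Real.norm_of_nonneg (zero_le_one.trans hden)]
    exact (div_le_self (by positivity) hden).trans (by gcongr)
  exact hasDerivAt_tsum_of_isPreconnected (summable_geometric_of_lt_one hr_pos.le hr)
    Metric.isOpen_ball (convex_ball 0 r).isPreconnected
    (fun k y _ => hasDerivAt_pow_succ_div s k y) hbound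
    (Metric.mem_ball_self hr_pos) (by simp) (mem_ball_zero_iff.2 hxr)

lemma hasDerivAt_Li_succ (s : ℕ) (hx₀ : x ≠ 0) (hx : |x| < 1) :
    HasDerivAt (Li (s + 1)) (Li s x / x) x := by
  rw [Li_eq_mul_tsum, mul_div_cancel_left₀ _ hx₀]
  exact hasDerivAt_Li_succ_tsum s hx

lemma hasDerivAt_Li_succ_one_sub (s : ℕ) (hx₁ : x ≠ 1) (hx : |1 - x| < 1) :
    HasDerivAt (fun y => Li (s + 1) (1 - y)) (-(Li s (1 - x) / (1 - x))) x :=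
  (hasDerivAt_Li_succ s (sub_ne_zero.2 hx₁.symm) hx).comp_const_sub 1 x

lemma hasDerivAt_Li_two (hx₀ : x ≠ 0) (hx : |x| < 1) :
    HasDerivAt (Li 2) (-log (1 - x) / x) x := by
  simpa only [Li_one_left hx] using hasDerivAt_Li_succ 1 hx₀ hx

lemma hasDerivAt_Li_two_one_sub (hx₁ : x ≠ 1) (hx : |1 - x| < 1) :
    HasDerivAt (fun y => Li 2 (1 - y)) (log x / (1 - x)) x := by
  simpa only [Li_one_left hx, sub_sub_cancel, neg_div, neg_neg] using
    hasDerivAt_Li_succ_one_sub 1 hx₁ hx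

end Polylogarithm

section Reflection

variable {x : ℝ}

lemma hasDerivAt_log_one_sub (hx : x ≠ 1) :
    HasDerivAt (fun y => log (1 - y)) (-(1 - x)⁻¹) x :=
  (hasDerivAt_log (sub_ne_zero.2 hx.symm)).comp_const_sub 1 x

/- At `0` and `1` the convention `log 0 = 0` gives the product its limit value `0`. -/
lemma continuous_log_mul_log_one_sub : Continuous fun x : ℝ => log x * log (1 - x) := by
  have at_zero : ContinuousAt (fun x : ℝ => log x * log (1 - x)) 0 := by
    have hslope : ContinuousAt (dslope (fun y : ℝ => log (1 - y)) 0) 0 :=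
      continuousAt_dslope_same.2 (hasDerivAt_log_one_sub zero_ne_one).differentiableAt
    refine (continuous_mul_log.continuousAt.mul hslope).congr (.of_forall fun x => ?_)
    have hx : x * dslope (fun y : ℝ => log (1 - y)) 0 x = log (1 - x) := by
      simpa using sub_smul_dslope (fun y : ℝ => log (1 - y)) 0 x
    simp only [Pi.mul_apply, ← hx]
    ring
  have at_one : ContinuousAt (fun x : ℝ => log x * log (1 - x)) 1 := by
    have hrefl : ContinuousAt (fun x : ℝ => 1 - x) 1 := by fun_prop
    simpa [Function.comp_def, mul_comm] using
      ContinuousAt.comp_of_eq at_zero hrefl (sub_self (1 : ℝ))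
  refine continuous_iff_continuousAt.2 fun x => ?_
  rcases eq_or_ne x 0 with rfl | hx₀
  · exact at_zero
  rcases eq_or_ne x 1 with rfl | hx₁
  · exact at_one
  · exact (continuousAt_log hx₀).mul (hasDerivAt_log_one_sub hx₁).continuousAt

lemma continuousOn_Li_two_reflection :
    ContinuousOn (fun x => Li 2 x + Li 2 (1 - x) + log x * log (1 - x)) (Icc 0 1) := by
  have hLi : ContinuousOn (Li 2) (Icc 0 1) :=
    (continuousOn_Li one_lt_two).mono (Icc_subset_Icc_left (by norm_num))
  have hmaps : MapsTo (fun x : ℝ => 1 - x) (Icc 0 1) (Icc 0 1) :=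
    fun x hx => ⟨sub_nonneg.2 hx.2, sub_le_self 1 hx.1⟩
  exact (hLi.add (hLi.comp (by fun_prop) hmaps)).add continuous_log_mul_log_one_sub.continuousOn

lemma abs_lt_one_of_mem_Ioo (hx : x ∈ Ioo 0 1) : |x| < 1 :=
  abs_lt.2 ⟨by linarith [hx.1], hx.2⟩

lemma abs_one_sub_lt_one_of_mem_Ioo (hx : x ∈ Ioo 0 1) : |1 - x| < 1 :=
  abs_lt_one_of_mem_Ioo ⟨sub_pos.2 hx.2, sub_lt_self 1 hx.1⟩

lemma hasDerivAt_Li_two_reflection (hx : x ∈ Ioo 0 1) :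
    HasDerivAt (fun y => Li 2 y + Li 2 (1 - y) + log y * log (1 - y)) 0 x := by
  have hx₀ : x ≠ 0 := hx.1.ne'
  have hx₁ : x ≠ 1 := hx.2.ne
  refine (((hasDerivAt_Li_two hx₀ (abs_lt_one_of_mem_Ioo hx)).add
    (hasDerivAt_Li_two_one_sub hx₁ (abs_one_sub_lt_one_of_mem_Ioo hx))).add
    ((hasDerivAt_log hx₀).mul (hasDerivAt_log_one_sub hx₁))).congr_deriv ?_
  ring

lemma Li_two_add_Li_two_one_sub (hx : x ∈ Icc 0 1) :
    Li 2 x + Li 2 (1 - x) + log x * log (1 - x) = π ^ 2 / 6 := by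
  have hzero : Li 2 0 + Li 2 (1 - 0) + log 0 * log (1 - 0) = π ^ 2 / 6 := by
    simp [Li_zero_right, Li_two_one]
  rcases hx.1.eq_or_lt with rfl | hx₀
  · exact hzero
  obtain ⟨c, -, hslope⟩ := exists_hasDerivAt_eq_slope _ (fun _ => 0) hx₀
    (continuousOn_Li_two_reflection.mono (Icc_subset_Icc_right hx.2))
    fun y hy => hasDerivAt_Li_two_reflection ⟨hy.1, hy.2.trans_le hx.2⟩
  have hdiff := (div_eq_zero_iff.1 hslope.symm).resolve_right (sub_ne_zero.2 hx₀.ne')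
  exact (sub_eq_zero.1 hdiff).trans hzero

end Reflection

section Primitives

variable {x : ℝ}

lemma hasDerivAt_primitive_log_one_sub (hx : x ≠ 1) :
    HasDerivAt (fun y => (y - 1) * log (1 - y) - y) (log (1 - x)) x := by
  have hx' : 1 - x ≠ 0 := sub_ne_zero.2 hx.symm
  refine ((((hasDerivAt_id' x).sub_const 1).mul (hasDerivAt_log_one_sub hx)).sub
    (hasDerivAt_id' x)).congr_deriv ?_
  field_simp
  ring

lemma hasDerivAt_primitive_log_one_sub_sq (hx : x ≠ 1) :
    HasDerivAt (fun y => (y - 1) * (log (1 - y) ^ 2 - 2 * log (1 - y)) + 2 * y)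
      (log (1 - x) ^ 2) x := by
  have hx' : 1 - x ≠ 0 := sub_ne_zero.2 hx.symm
  have hL := hasDerivAt_log_one_sub hx
  refine ((((hasDerivAt_id' x).sub_const 1).mul ((hL.fun_pow 2).fun_sub (hL.const_mul 2))).add
    ((hasDerivAt_id' x).const_mul 2)).congr_deriv ?_
  field_simp
  ring

lemma hasDerivAt_primitive_log_one_sub_sq_div (hx₁ : x ≠ 1) (hx : |1 - x| < 1) :
    HasDerivAt
      (fun y => log y * log (1 - y) ^ 2 + 2 * (log (1 - y) * Li 2 (1 - y)) - 2 * Li 3 (1 - y))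
      (log (1 - x) ^ 2 / x) x := by
  have hx₀ : x ≠ 0 := by rintro rfl; simp at hx
  have hL := hasDerivAt_log_one_sub hx₁
  refine ((((hasDerivAt_log hx₀).mul (hL.fun_pow 2)).add
    ((hL.mul (hasDerivAt_Li_two_one_sub hx₁ hx)).const_mul 2)).sub
    ((hasDerivAt_Li_succ_one_sub 2 hx₁ hx).const_mul 2)).congr_deriv ?_
  ring

lemma hasDerivAt_primitive_Li_two_mul_log_one_sub (hx : x ∈ Ioo 0 1) :
    HasDerivAt
      (fun y => ((y - 1) * log (1 - y) - y) * Li 2 y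
        - (log y * log (1 - y) ^ 2 + 2 * (log (1 - y) * Li 2 (1 - y)) - 2 * Li 3 (1 - y))
        + ((y - 1) * (log (1 - y) ^ 2 - 2 * log (1 - y)) + 2 * y)
        - ((y - 1) * log (1 - y) - y))
      (Li 2 x * log (1 - x)) x := by
  have hx₀ : x ≠ 0 := hx.1.ne'
  have hx₁ : x ≠ 1 := hx.2.ne
  have hP := hasDerivAt_primitive_log_one_sub hx₁
  have hparts : ((x - 1) * log (1 - x) - x) * (-log (1 - x) / x)
      = log (1 - x) ^ 2 / x - log (1 - x) ^ 2 + log (1 - x) := by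
    field_simp
    ring
  refine ((((hP.mul (hasDerivAt_Li_two hx₀ (abs_lt_one_of_mem_Ioo hx))).sub
    (hasDerivAt_primitive_log_one_sub_sq_div hx₁ (abs_one_sub_lt_one_of_mem_Ioo hx))).add
    (hasDerivAt_primitive_log_one_sub_sq hx₁)).sub hP).congr_deriv ?_
  linear_combination hparts

lemma hasDerivAt_mul_Li_two_sq (hx₀ : x ≠ 0) (hx : |x| < 1) :
    HasDerivAt (fun y => y * Li 2 y ^ 2) (Li 2 x ^ 2 - 2 * (Li 2 x * log (1 - x))) x := by
  refine ((hasDerivAt_id' x).mul ((hasDerivAt_Li_two hx₀ hx).fun_pow 2)).congr_deriv ?_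
  field_simp
  ring

end Primitives

theorem stmt_10 (t : ℝ) (h1 : 0 < t) (h2 : t < 1) :
    HasDerivAt (fun t : ℝ =>
      -2 + 6 * t + 6 * (1 - t - π ^ 2 / 9) * Real.log (1 - t)
        - 2 * (1 - t - Real.log t) * Real.log (1 - t) ^ 2
        - 2 * (t - (1 + t) * Real.log (1 - t)) * Li 2 t
        + t * (Li 2 t) ^ 2 + 4 * Li 3 (1 - t))
      ((Li 2 t) ^ 2) t := by
  have ht : t ∈ Ioo 0 1 := ⟨h1, h2⟩
  have hprim := ((hasDerivAt_mul_Li_two_sq h1.ne' (abs_lt_one_of_mem_Ioo ht)).add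
    ((hasDerivAt_primitive_Li_two_mul_log_one_sub ht).const_mul 2)).const_add (-2)
  rw [sub_add_cancel] at hprim
  refine hprim.congr_of_eventuallyEq ?_
  filter_upwards [isOpen_Ioo.mem_nhds ht] with x hx
  have hrefl : Li 2 (1 - x) = π ^ 2 / 6 - log x * log (1 - x) - Li 2 x := by
    linarith [Li_two_add_Li_two_one_sub (Ioo_subset_Icc_self hx)]
  simp only [Pi.add_apply, hrefl]
  ring
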